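/- arXiv:1812.09935 — 6 statements merged into one kernel-verified Lean document; each statement's English description precedes it below -/
import Mathlib

section
/- The uniform persistence p-landscape is 1-Lipschitz: for every n-parameter persistence module M, every p ∈ [1,∞], every k ∈ ℕ and all x, y ∈ ℝ^n, one has |λ_p(k,x) − λ_p(k,y)| ≤ ‖x − y‖_p. -/
open scoped ENNReal NNReal BigOperators

universe u v w

/-- A persistence module over a preorder `P` with coefficients in a field `𝕜`:
a functor from the poset `P` to the category of `𝕜`-vector spaces. -/
structure PersistenceModule (P : Type u) [Preorder P] (𝕜 : Type v) [Field 𝕜] where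
  obj : P → Type w
  [isAddCommGroup : ∀ a, AddCommGroup (obj a)]
  [isModule : ∀ a, Module 𝕜 (obj a)]
  map : ∀ {a b : P}, a ≤ b → (obj a →ₗ[𝕜] obj b)
  map_id : ∀ a : P, map (le_refl a) = LinearMap.id
  map_comp : ∀ {a b c : P} (hab : a ≤ b) (hbc : b ≤ c),
      map (le_trans hab hbc) = (map hbc).comp (map hab)

attribute [instance] PersistenceModule.isAddCommGroup PersistenceModule.isModule

namespace PersistenceModule

variable {P : Type u} [Preorder P] {𝕜 : Type v} [Field 𝕜]

/-- The rank invariant `β^{a,b} = dim (Im (M (a ≤ b)))`. -/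
noncomputable def rankInv (M : PersistenceModule P 𝕜) {a b : P} (hab : a ≤ b) : Cardinal :=
  Module.rank 𝕜 (LinearMap.range (M.map hab))

/-- Pointwise finite dimensional persistence module. -/
def PointwiseFiniteDimensional (M : PersistenceModule P 𝕜) : Prop :=
  ∀ a : P, FiniteDimensional 𝕜 (M.obj a)

section Landscape

variable {n : ℕ}

lemma sub_le_add_self {x h : Fin n → ℝ} (hh : 0 ≤ h) : x - h ≤ x + h :=
  le_trans (sub_le_self x hh) (le_add_of_nonneg_right hh)

/-- Generalised landscape function with respect to a size function `ν` on `ℝⁿ`: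
`λ(k, x) = sup { ε ≥ 0 : β^{x-h, x+h} ≥ k for all h ≥ 0 with ν h ≤ ε }`. -/
noncomputable def landscapeBy (ν : (Fin n → ℝ) → ℝ)
    (M : PersistenceModule (Fin n → ℝ) 𝕜) (k : ℕ) (x : Fin n → ℝ) : ℝ≥0∞ :=
  sSup {ε : ℝ≥0∞ | ∀ h : Fin n → ℝ, (hh : 0 ≤ h) → ENNReal.ofReal (ν h) ≤ ε →
    (k : Cardinal) ≤ M.rankInv (sub_le_add_self hh (x := x))}

/-- The uniform persistence `∞`-landscape (the sup norm is the norm on `Fin n → ℝ`). -/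
noncomputable def landscapeInfty (M : PersistenceModule (Fin n → ℝ) 𝕜) :
    ℕ → (Fin n → ℝ) → ℝ≥0∞ :=
  landscapeBy (fun h => ‖h‖) M

/-- The `w`-weighted infinity norm `‖h‖_∞^w = max_i |w_i h_i|`. -/
noncomputable def wnorm (w : Fin n → ℝ) (h : Fin n → ℝ) : ℝ :=
  ‖fun i => w i * h i‖

/-- The `w`-weighted persistence landscape. -/
noncomputable def landscapeW (w : Fin n → ℝ) (M : PersistenceModule (Fin n → ℝ) 𝕜) :
    ℕ → (Fin n → ℝ) → ℝ≥0∞ :=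
  landscapeBy (wnorm w) M

/-- The `p`-norm on `ℝⁿ`, via `PiLp`. -/
noncomputable def pnorm (p : ℝ≥0∞) [Fact (1 ≤ p)] (h : Fin n → ℝ) : ℝ :=
  ‖(WithLp.equiv p (Fin n → ℝ)).symm h‖

/-- The uniform persistence `p`-landscape. -/
noncomputable def landscapeP (p : ℝ≥0∞) [Fact (1 ≤ p)]
    (M : PersistenceModule (Fin n → ℝ) 𝕜) : ℕ → (Fin n → ℝ) → ℝ≥0∞ :=
  landscapeBy (pnorm p) M

end Landscape

section Interleaving

/-- An `(Γ, K)`-interleaving between two persistence modules. -/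
structure Interleaving (M N : PersistenceModule P 𝕜) (Γ K : P → P)
    (hΓ : Monotone Γ) (hΓi : ∀ x, x ≤ Γ x) (hK : Monotone K) (hKi : ∀ x, x ≤ K x) where
  φ : ∀ a : P, M.obj a →ₗ[𝕜] N.obj (Γ a)
  ψ : ∀ a : P, N.obj a →ₗ[𝕜] M.obj (K a)
  φ_nat : ∀ {a b : P} (hab : a ≤ b), (φ b).comp (M.map hab) = (N.map (hΓ hab)).comp (φ a)
  ψ_nat : ∀ {a b : P} (hab : a ≤ b), (ψ b).comp (N.map hab) = (M.map (hK hab)).comp (ψ a)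
  comm₁ : ∀ a : P, (ψ (Γ a)).comp (φ a) = M.map ((hΓi a).trans (hKi (Γ a)))
  comm₂ : ∀ a : P, (φ (K a)).comp (ψ a) = N.map ((hKi a).trans (hΓi (K a)))

variable {n : ℕ}

/-- Interleaving distance with respect to the sublinear projection induced by a size
function `ν`, i.e. `ω_Γ = sup_x ν (Γ x - x)`. -/
noncomputable def interleavingDistBy (ν : (Fin n → ℝ) → ℝ)
    (M N : PersistenceModule (Fin n → ℝ) 𝕜) : ℝ≥0∞ :=
  sInf {ε : ℝ≥0∞ | ∃ (Γ K : (Fin n → ℝ) → (Fin n → ℝ)) (hΓ : Monotone Γ)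
    (hΓi : ∀ x, x ≤ Γ x) (hK : Monotone K) (hKi : ∀ x, x ≤ K x),
    Nonempty (Interleaving M N Γ K hΓ hΓi hK hKi) ∧
    (⨆ x, ENNReal.ofReal (ν (Γ x - x))) ≤ ε ∧ (⨆ x, ENNReal.ofReal (ν (K x - x))) ≤ ε}

/-- The interleaving distance with respect to `ω_Γ = ‖Γ - id‖_∞`. -/
noncomputable def interleavingDist (M N : PersistenceModule (Fin n → ℝ) 𝕜) : ℝ≥0∞ :=
  interleavingDistBy (fun h => ‖h‖) M N

end Interleaving

end PersistenceModule

namespace PersistenceModule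

/-- The rank invariant decreases when the interval is enlarged. -/
lemma rankInv_le_of_le {P : Type u} [Preorder P] {𝕜 : Type v} [Field 𝕜]
    (M : PersistenceModule P 𝕜) {a b c d : P} (hab : a ≤ b) (hbc : b ≤ c) (hcd : c ≤ d)
    (had : a ≤ d) : M.rankInv had ≤ M.rankInv hbc := by
  have e : M.map had = (M.map hcd).comp ((M.map hbc).comp (M.map hab)) := by
    rw [← M.map_comp, ← M.map_comp]
  unfold rankInv
  have h1 : LinearMap.range (M.map had) ≤
      (LinearMap.range (M.map hbc)).map (M.map hcd) := by
    rw [e]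
    rintro _ ⟨z, rfl⟩
    exact ⟨_, ⟨M.map hab z, rfl⟩, rfl⟩
  exact (Submodule.rank_mono h1).trans (rank_map_le _ _)

lemma pnorm_add_abs_le {n : ℕ} (p : ℝ≥0∞) [Fact (1 ≤ p)] (h z : Fin n → ℝ) :
    pnorm p (h + |z|) ≤ pnorm p h + pnorm p z := by
  have e : pnorm p |z| = pnorm p z := by
    unfold pnorm
    rcases p.trichotomy with hp | hp | hp
    · subst hp
      exact absurd (Fact.out : (1 : ℝ≥0∞) ≤ 0) (by simp)
    · subst hp
      simp [PiLp.norm_eq_ciSup]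
    · simp [PiLp.norm_eq_sum hp]
  rw [← e]
  exact norm_add_le (WithLp.toLp p h) (WithLp.toLp p |z|)

lemma landscapeP_le_add {n : ℕ} {𝕜 : Type v} [Field 𝕜]
    (M : PersistenceModule (Fin n → ℝ) 𝕜) (p : ℝ≥0∞) [Fact (1 ≤ p)]
    (k : ℕ) (x y : Fin n → ℝ) :
    landscapeP p M k x ≤ landscapeP p M k y + ENNReal.ofReal (pnorm p (x - y)) := by
  refine sSup_le fun ε hε => ?_
  rcases le_total ε (ENNReal.ofReal (pnorm p (x - y))) with hd | hd
  · exact hd.trans le_add_self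
  rw [← tsub_le_iff_right]
  refine le_sSup fun h hh hle => ?_
  have hh' : 0 ≤ h + |x - y| := add_nonneg hh (abs_nonneg _)
  refine (hε (h + |x - y|) hh' ?_).trans (rankInv_le_of_le M ?_ _ ?_ _)
  · calc ENNReal.ofReal (pnorm p (h + |x - y|))
        ≤ ENNReal.ofReal (pnorm p h + pnorm p (x - y)) :=
          ENNReal.ofReal_le_ofReal (pnorm_add_abs_le p h _)
      _ ≤ ENNReal.ofReal (pnorm p h) + ENNReal.ofReal (pnorm p (x - y)) :=
          ENNReal.ofReal_add_le
      _ ≤ (ε - ENNReal.ofReal (pnorm p (x - y))) + ENNReal.ofReal (pnorm p (x - y)) := by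
          gcongr
      _ = ε := tsub_add_cancel_of_le hd
  · intro i
    have := le_abs_self (x i - y i)
    simp only [Pi.sub_apply, Pi.add_apply, Pi.abs_apply]
    linarith
  · intro i
    have := neg_abs_le (x i - y i)
    simp only [Pi.sub_apply, Pi.add_apply, Pi.abs_apply]
    linarith

/-- The uniform persistence `p`-landscape is 1-Lipschitz: for every
`n`-parameter persistence module `M`, every `p ∈ [1,∞]`, every `k ∈ ℕ` and all
`x, y ∈ ℝⁿ`, `|λ_p(k,x) − λ_p(k,y)| ≤ ‖x − y‖_p` (stated in `ℝ≥0∞` as the pair of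
inequalities expressing the bound on the absolute difference). -/
theorem landscapeP_lipschitz {n : ℕ} {𝕜 : Type v} [Field 𝕜]
    (M : PersistenceModule (Fin n → ℝ) 𝕜) (p : ℝ≥0∞) [Fact (1 ≤ p)]
    (k : ℕ) (x y : Fin n → ℝ) :
    landscapeP p M k x ≤ landscapeP p M k y + ENNReal.ofReal (pnorm p (x - y)) ∧
    landscapeP p M k y ≤ landscapeP p M k x + ENNReal.ofReal (pnorm p (x - y)) := by
  refine ⟨landscapeP_le_add M p k x y, ?_⟩
  have e : pnorm p (x - y) = pnorm p (y - x) :=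
    norm_sub_rev (WithLp.toLp p x) (WithLp.toLp p y)
  rw [e]
  exact landscapeP_le_add M p k y x

end PersistenceModule
end

section
/- Multiparameter landscape stability: if M and M' are pointwise finite dimensional n-parameter persistence modules, then the supremum norm of the difference of their uniform persistence ∞-landscapes is bounded by their interleaving distance: sup_{k ∈ ℕ, x ∈ ℝ^n} |λ_∞(M)(k,x) − λ_∞(M')(k,x)| ≤ d^ω(M,M'), where ω is the sublinear projection ω_Γ = ‖Γ − id‖_∞. -/
open scoped ENNReal NNReal BigOperators

universe u v w

namespace PersistenceModule

/-- If `M(a ≤ b)` factors through `N(c ≤ d)`, ranks compare. -/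
lemma natCast_le_rankInv_of_factor {P : Type u} [Preorder P] {𝕜 : Type v} [Field 𝕜]
    (M N : PersistenceModule P 𝕜) {a b c d : P} (hab : a ≤ b) (hcd : c ≤ d)
    (G : M.obj a →ₗ[𝕜] N.obj c) (F : N.obj d →ₗ[𝕜] M.obj b)
    (hfac : M.map hab = F.comp ((N.map hcd).comp G)) (k : ℕ)
    (hk : (k : Cardinal) ≤ M.rankInv hab) : (k : Cardinal) ≤ N.rankInv hcd := by
  have h1 := LinearMap.lift_rank_comp_le_right ((N.map hcd).comp G) F
  have h2 := LinearMap.rank_comp_le_left G (N.map hcd)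
  rw [← hfac] at h1
  have h3 : Cardinal.lift (k : Cardinal) ≤ _ := (Cardinal.lift_le.2 hk).trans h1
  rw [Cardinal.lift_natCast, Cardinal.nat_le_lift_iff] at h3
  exact h3.trans h2

lemma Interleaving.factor {P : Type u} [Preorder P] {𝕜 : Type v} [Field 𝕜]
    {M N : PersistenceModule P 𝕜} {Γ K : P → P}
    {hΓ : Monotone Γ} {hΓi : ∀ x, x ≤ Γ x} {hK : Monotone K} {hKi : ∀ x, x ≤ K x}
    (I : Interleaving M N Γ K hΓ hΓi hK hKi) {a b c d : P} (hab : a ≤ b) (hcd : c ≤ d)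
    (hac : Γ a ≤ c) (hdb : K d ≤ b) :
    M.map hab = ((M.map hdb).comp (I.ψ d)).comp
      ((N.map hcd).comp ((N.map hac).comp (I.φ a))) := by
  have e1 : M.map hab = (M.map hdb).comp ((M.map (hK (hac.trans hcd))).comp
      (M.map ((hΓi a).trans (hKi (Γ a))))) := by
    rw [← M.map_comp, ← M.map_comp]

  rw [e1, ← I.comm₁, ← LinearMap.comp_assoc (I.φ a), ← I.ψ_nat (hac.trans hcd), N.map_comp hac hcd]
  rfl

lemma Interleaving.landscape_le {n : ℕ} {𝕜 : Type v} [Field 𝕜]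
    {M N : PersistenceModule (Fin n → ℝ) 𝕜} {Γ K : (Fin n → ℝ) → (Fin n → ℝ)}
    {hΓ : Monotone Γ} {hΓi : ∀ x, x ≤ Γ x} {hK : Monotone K} {hKi : ∀ x, x ≤ K x}
    (I : Interleaving M N Γ K hΓ hΓi hK hKi) (δ : ℝ≥0∞)
    (h1 : (⨆ x, ENNReal.ofReal (‖Γ x - x‖)) ≤ δ) (h2 : (⨆ x, ENNReal.ofReal (‖K x - x‖)) ≤ δ)
    (k : ℕ) (x : Fin n → ℝ) : landscapeInfty M k x ≤ landscapeInfty N k x + δ := by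
  rcases eq_or_ne δ ⊤ with rfl | hδ
  · simp
  lift δ to ℝ≥0 using hδ
  have key : ∀ (T : (Fin n → ℝ) → (Fin n → ℝ)),
      (⨆ x, ENNReal.ofReal (‖T x - x‖)) ≤ (δ : ℝ≥0∞) → ∀ y, T y ≤ y + fun _ => (δ : ℝ) := by
    intro T hT y i
    have h := (le_iSup (fun x => ENNReal.ofReal (‖T x - x‖)) y).trans hT
    have h' : ‖T y - y‖ ≤ δ := by
      rw [← ENNReal.ofReal_coe_nnreal] at h
      exact (ENNReal.ofReal_le_ofReal_iff δ.coe_nonneg).1 h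
    have h3 := (le_abs_self _).trans ((norm_le_pi_norm (T y - y) i).trans h')
    simp only [Pi.sub_apply] at h3
    simp only [Pi.add_apply]
    linarith
  refine sSup_le fun ε hε => ?_
  rcases le_total ε (δ : ℝ≥0∞) with hle | hle
  · exact hle.trans le_add_self
  rw [← tsub_le_iff_right]
  refine le_sSup ?_
  intro h hh hn
  have hD : (0 : Fin n → ℝ) ≤ fun _ => (δ : ℝ) := fun _ => δ.coe_nonneg
  have hh' : 0 ≤ h + fun _ => (δ : ℝ) := add_nonneg hh hD
  have hnorm : ENNReal.ofReal ‖h + fun _ => (δ : ℝ)‖ ≤ ε := by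
    have hc : ‖(fun _ => (δ : ℝ) : Fin n → ℝ)‖ ≤ δ := by
      rw [pi_norm_le_iff_of_nonneg δ.coe_nonneg]
      intro i
      simp
    calc ENNReal.ofReal ‖h + fun _ => (δ : ℝ)‖
        ≤ ENNReal.ofReal (‖h‖ + δ) :=
          ENNReal.ofReal_le_ofReal ((norm_add_le _ _).trans (by linarith))
      _ = ENNReal.ofReal ‖h‖ + δ := by
          rw [ENNReal.ofReal_add (norm_nonneg _) δ.coe_nonneg, ENNReal.ofReal_coe_nnreal]
      _ ≤ (ε - δ) + δ := by gcongr
      _ = ε := tsub_add_cancel_of_le hle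
  have hk := hε _ hh' hnorm
  have hac : Γ (x - (h + fun _ => (δ : ℝ))) ≤ x - h := by
    refine (key Γ h1 _).trans (le_of_eq ?_)
    abel
  have hdb : K (x + h) ≤ x + (h + fun _ => (δ : ℝ)) := by
    refine (key K h2 _).trans (le_of_eq ?_)
    abel
  exact natCast_le_rankInv_of_factor M N _ _ _ _
    (I.factor (sub_le_add_self hh') (sub_le_add_self hh) hac hdb) k hk

/-- Interleavings are symmetric. -/
def Interleaving.swap {P : Type u} [Preorder P] {𝕜 : Type v} [Field 𝕜]
    {M N : PersistenceModule P 𝕜} {Γ K : P → P}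
    {hΓ : Monotone Γ} {hΓi : ∀ x, x ≤ Γ x} {hK : Monotone K} {hKi : ∀ x, x ≤ K x}
    (I : Interleaving M N Γ K hΓ hΓi hK hKi) : Interleaving N M K Γ hK hKi hΓ hΓi where
  φ := I.ψ
  ψ := I.φ
  φ_nat := I.ψ_nat
  ψ_nat := I.φ_nat
  comm₁ := I.comm₂
  comm₂ := I.comm₁

/-- Multiparameter landscape stability: for pointwise finite dimensional
`n`-parameter persistence modules `M, M'`, the supremum over `k ∈ ℕ` and `x ∈ ℝⁿ` of
`|λ_∞(M)(k,x) − λ_∞(M')(k,x)|` is bounded by the interleaving distance `d^ω(M,M')`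
with respect to the sublinear projection `ω_Γ = ‖Γ − id‖_∞` (stated in `ℝ≥0∞` as the
pair of inequalities expressing the bound on the absolute difference, pointwise in
`k` and `x`, which is equivalent to the bound on the supremum). -/
theorem landscapeInfty_stability {n : ℕ} {𝕜 : Type v} [Field 𝕜]
    (M M' : PersistenceModule (Fin n → ℝ) 𝕜)
    (hM : M.PointwiseFiniteDimensional) (hM' : M'.PointwiseFiniteDimensional)
    (k : ℕ) (x : Fin n → ℝ) :
    landscapeInfty M k x ≤ landscapeInfty M' k x + interleavingDist M M' ∧
    landscapeInfty M' k x ≤ landscapeInfty M k x + interleavingDist M M' := by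
  constructor
  · rw [← tsub_le_iff_left]
    refine le_sInf ?_
    rintro δ ⟨Γ, K, hΓ, hΓi, hK, hKi, ⟨I⟩, h1, h2⟩
    rw [tsub_le_iff_left]
    exact I.landscape_le δ h1 h2 k x
  · rw [← tsub_le_iff_left]
    refine le_sInf ?_
    rintro δ ⟨Γ, K, hΓ, hΓi, hK, hKi, ⟨I⟩, h1, h2⟩
    rw [tsub_le_iff_left]
    exact I.swap.landscape_le δ h2 h1 k x

end PersistenceModule
end

section
/- For an interval decomposable n-parameter persistence module M ≅ ⨁_j 𝟙^{I_j}, the uniform persistence ∞-landscape is the pointwise k-th maximum of the landscapes of its interval summands: λ_∞(M)(k,x) = kmax_j λ_∞(𝟙^{I_j})(1,x), where kmax denotes the k-th largest value of the multiset. -/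
open scoped ENNReal NNReal BigOperators

universe u v w

namespace PersistenceModule

variable {P : Type u} [Preorder P] {𝕜 : Type v} [Field 𝕜]

/-- Convexity condition for an interval: if `s, t ∈ I` and `s ≤ r ≤ t` then `r ∈ I`. -/
def IntervalConvex (I : Set P) : Prop :=
  ∀ ⦃s r t : P⦄, s ∈ I → t ∈ I → s ≤ r → r ≤ t → r ∈ I

/-- An interval in a poset: a convex subset any two of whose points are joined by a
zigzag of comparable points inside the subset. -/
def IsInterval (I : Set P) : Prop :=
  IntervalConvex I ∧
  ∀ s ∈ I, ∀ t ∈ I,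
    Relation.ReflTransGen (fun u v : P => u ∈ I ∧ v ∈ I ∧ (u ≤ v ∨ v ≤ u)) s t

/-- The value of the interval module `𝟙^I` at `a`: a copy of `𝕜` if `a ∈ I`, and `0`
otherwise, realised as a submodule of `𝕜`. -/
def intervalSubmodule (𝕜 : Type v) [Field 𝕜] (I : Set P) (a : P) : Submodule 𝕜 𝕜 where
  carrier := {x : 𝕜 | a ∉ I → x = 0}
  zero_mem' := fun _ => rfl
  add_mem' := by
    intro x y hx hy h
    rw [hx h, hy h, add_zero]
  smul_mem' := by
    intro c x hx h
    rw [smul_eq_mul, hx h, mul_zero]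

open Classical in
/-- The internal morphisms of the interval module: the identity whenever possible. -/
noncomputable def intervalMap (𝕜 : Type v) [Field 𝕜] (I : Set P) {a b : P} (_ : a ≤ b) :
    intervalSubmodule 𝕜 I a →ₗ[𝕜] intervalSubmodule 𝕜 I b :=
  if h : a ∈ I ∧ b ∈ I then
    { toFun := fun x => ⟨x.1, fun hb => absurd h.2 hb⟩
      map_add' := fun x y => rfl
      map_smul' := fun c x => rfl }
  else 0

lemma intervalSubmodule_eq_zero {I : Set P} {a : P} (ha : a ∉ I)
    (x : intervalSubmodule 𝕜 I a) : (x : 𝕜) = 0 := x.2 ha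

/-- The interval module `𝟙^I` of a convex subset `I` of the poset `P`. -/
noncomputable def intervalModule (𝕜 : Type v) [Field 𝕜] (I : Set P) (hconv : IntervalConvex I) :
    PersistenceModule P 𝕜 where
  obj a := intervalSubmodule 𝕜 I a
  map hab := intervalMap 𝕜 I hab
  map_id a := by
    ext x
    by_cases h : a ∈ I
    · simp [intervalMap, h]
    · simp only [intervalMap, LinearMap.id_coe, id_eq]
      rw [dif_neg (by tauto)]
      simp [LinearMap.zero_apply, (x.2 h).symm]
  map_comp {a b c} hab hbc := by
    ext x
    by_cases hac : a ∈ I ∧ c ∈ I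
    · have hb : b ∈ I := hconv hac.1 hac.2 hab hbc
      simp only [intervalMap, LinearMap.coe_comp, Function.comp_apply]
      rw [dif_pos hac, dif_pos (⟨hac.1, hb⟩ : a ∈ I ∧ b ∈ I),
        dif_pos (⟨hb, hac.2⟩ : b ∈ I ∧ c ∈ I)]
      rfl
    · simp only [intervalMap, LinearMap.coe_comp, Function.comp_apply]
      rw [dif_neg hac]
      simp only [LinearMap.zero_apply, ZeroMemClass.coe_zero]
      by_cases ha : a ∈ I
      · have hc : c ∉ I := fun hc => hac ⟨ha, hc⟩
        exact ((intervalMap 𝕜 I hbc (intervalMap 𝕜 I hab x)).2 hc).symm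
      · have hx : x = 0 := Subtype.ext (x.2 ha)
        rw [hx]
        simp
end PersistenceModule
namespace PersistenceModule

variable {P : Type u} [Preorder P] {𝕜 : Type v} [Field 𝕜]

/-- Direct sum of a family of persistence modules. -/
noncomputable def dirSum {ι : Type w} (Ms : ι → PersistenceModule P 𝕜) :
    PersistenceModule P 𝕜 where
  obj a := Π₀ i, (Ms i).obj a
  map hab := DFinsupp.mapRange.linearMap (fun i => (Ms i).map hab)
  map_id a := by
    have h : (fun i => (Ms i).map (le_refl a)) = fun i => LinearMap.id := by
      funext i; exact (Ms i).map_id a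
    show DFinsupp.mapRange.linearMap (fun i => (Ms i).map (le_refl a)) = LinearMap.id
    rw [h, DFinsupp.mapRange.linearMap_id]
  map_comp {a b c} hab hbc := by
    have h : (fun i => (Ms i).map (le_trans hab hbc)) =
        fun i => ((Ms i).map hbc).comp ((Ms i).map hab) := by
      funext i; exact (Ms i).map_comp hab hbc
    show DFinsupp.mapRange.linearMap (fun i => (Ms i).map (le_trans hab hbc)) =
      (DFinsupp.mapRange.linearMap (fun i => (Ms i).map hbc)).comp
        (DFinsupp.mapRange.linearMap (fun i => (Ms i).map hab))
    rw [h, DFinsupp.mapRange.linearMap_comp]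

/-- An isomorphism of persistence modules: a natural family of linear equivalences. -/
structure PersIso (M N : PersistenceModule P 𝕜) where
  e : ∀ a : P, M.obj a ≃ₗ[𝕜] N.obj a
  comm : ∀ {a b : P} (hab : a ≤ b) (x : M.obj a), e b (M.map hab x) = N.map hab (e a x)

/-- The zero persistence module. -/
def zeroMod (P : Type u) [Preorder P] (𝕜 : Type v) [Field 𝕜] : PersistenceModule P 𝕜 where
  obj _ := PUnit
  map _ := 0
  map_id _ := Subsingleton.elim _ _
  map_comp _ _ := Subsingleton.elim _ _

/-- Reindexing (pullback) of a persistence module along a monotone map. -/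
def reindex {Q : Type w} [Preorder Q] (φ : Q → P) (hφ : Monotone φ)
    (M : PersistenceModule P 𝕜) : PersistenceModule Q 𝕜 where
  obj a := M.obj (φ a)
  map hab := M.map (hφ hab)
  map_id a := M.map_id (φ a)
  map_comp hab hbc := M.map_comp (hφ hab) (hφ hbc)

/-- The single parameter persistence landscape
`λ(k, t) = sup { h ≥ 0 : β^{t-h, t+h} ≥ k }` (with `sup ∅ = 0`). -/
noncomputable def landscape1 (M : PersistenceModule ℝ 𝕜) (k : ℕ) (t : ℝ) : ℝ≥0∞ :=
  sSup (ENNReal.ofReal ''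
    {h : ℝ | ∃ hh : 0 ≤ h, (k : Cardinal) ≤ M.rankInv (show t - h ≤ t + h by linarith)})

/-- The `k`-th largest value of the multiset of values of `f`. -/
noncomputable def kmax {ι : Type w} (f : ι → ℝ≥0∞) (k : ℕ) : ℝ≥0∞ :=
  sSup {ε : ℝ≥0∞ | ∃ s : Finset ι, s.card = k ∧ ∀ j ∈ s, ε ≤ f j}

end PersistenceModule

namespace PersistenceModule

theorem intervalMap_of_mem {P : Type u} [Preorder P] {𝕜 : Type v} [Field 𝕜] {I : Set P} {a b : P}
    (hab : a ≤ b) (h : a ∈ I ∧ b ∈ I) (y : intervalSubmodule 𝕜 I a) :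
    ((intervalMap 𝕜 I hab y : intervalSubmodule 𝕜 I b) : 𝕜) = y.1 := by
  unfold intervalMap
  rw [dif_pos h]
  rfl

theorem intervalMap_of_not {P : Type u} [Preorder P] {𝕜 : Type v} [Field 𝕜] {I : Set P} {a b : P}
    (hab : a ≤ b) (h : ¬ (a ∈ I ∧ b ∈ I)) :
    intervalMap 𝕜 I hab = 0 := by
  unfold intervalMap
  rw [dif_neg h]

theorem one_le_rank_interval {P : Type u} [Preorder P] {𝕜 : Type v} [Field 𝕜] {I : Set P}
    (hc : IntervalConvex I) {a b : P} (hab : a ≤ b) :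
    ((1 : ℕ) : Cardinal) ≤ (intervalModule 𝕜 I hc).rankInv hab ↔ a ∈ I ∧ b ∈ I := by
  have key : (intervalModule 𝕜 I hc).rankInv hab = 0 ↔ ¬ (a ∈ I ∧ b ∈ I) := by
    show Module.rank 𝕜 (LinearMap.range (intervalMap 𝕜 I hab)) = 0 ↔ _
    rw [Submodule.rank_eq_zero, LinearMap.range_eq_bot]
    constructor
    · intro h0 h
      have := intervalMap_of_mem (𝕜 := 𝕜) hab h ⟨1, fun h' => absurd h.1 h'⟩
      rw [h0] at this
      simp at this
    · exact intervalMap_of_not hab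
  rw [Nat.cast_one, Cardinal.one_le_iff_ne_zero, Ne, key, not_not]

theorem le_rank_iff {P : Type u} [Preorder P] {𝕜 : Type v} [Field 𝕜]
    (M : PersistenceModule P 𝕜)
    {ι : Type} (I : ι → Set P) (hI : ∀ j, IsInterval (I j))
    (e : PersIso M (dirSum fun j => intervalModule 𝕜 (I j) (hI j).1))
    (k : ℕ) {a b : P} (hab : a ≤ b) :
    (k : Cardinal) ≤ M.rankInv hab ↔
      ∃ s : Finset ι, s.card = k ∧ ∀ j ∈ s, a ∈ I j ∧ b ∈ I j := by
  classical
  let J : Set ι := {j | a ∈ I j ∧ b ∈ I j}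
  let g : (Π₀ j, intervalSubmodule 𝕜 (I j) a) →ₗ[𝕜] (Π₀ j, intervalSubmodule 𝕜 (I j) b) :=
    DFinsupp.mapRange.linearMap (fun j => intervalMap 𝕜 (I j) hab)
  let ea : M.obj a ≃ₗ[𝕜] (Π₀ j, intervalSubmodule 𝕜 (I j) a) := e.e a
  let eb : M.obj b ≃ₗ[𝕜] (Π₀ j, intervalSubmodule 𝕜 (I j) b) := e.e b
  have hcomm : ∀ y, eb (M.map hab y) = g (ea y) := fun y => e.comm hab y
  let v : J → (Π₀ j, intervalSubmodule 𝕜 (I j) b) := fun j =>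
    DFinsupp.single j.1 ⟨1, fun h => absurd j.2.2 h⟩
  have hv : LinearIndependent 𝕜 v := by
    rw [linearIndependent_iff]
    intro l hl
    ext j
    have h1 := congrArg (fun f : (Π₀ j, intervalSubmodule 𝕜 (I j) b) => ((f j.1 : intervalSubmodule 𝕜 (I j.1) b) : 𝕜)) hl
    let p : (Π₀ j, intervalSubmodule 𝕜 (I j) b) →ₗ[𝕜] 𝕜 :=
      (Submodule.subtype _).comp (DFinsupp.lapply (R := 𝕜) j.1)
    have h2 : p (Finsupp.linearCombination 𝕜 v l) = 0 := by rw [hl, map_zero]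
    rw [Finsupp.apply_linearCombination, Finsupp.linearCombination_apply, Finsupp.sum,
      Finset.sum_eq_single j] at h2
    · simpa [p, v] using h2
    · intro i _ hij
      have : (i : ι) ≠ j := fun h => hij (Subtype.ext h)
      simp [p, v, DFinsupp.single_eq_of_ne this.symm]
    · intro h
      simp [Finsupp.notMem_support_iff.1 h]
  have hspan : LinearMap.range g = Submodule.span 𝕜 (Set.range v) := by
    apply le_antisymm
    · rintro _ ⟨y, rfl⟩
      induction y using DFinsupp.induction with
      | h0 => simp
      | ha i c f _ _ ih =>
        rw [map_add]
        refine Submodule.add_mem _ ?_ ih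
        have hg : g (DFinsupp.single i c) = DFinsupp.single i (intervalMap 𝕜 (I i) hab c) := by
          simp [g]
        rw [hg]
        by_cases h : a ∈ I i ∧ b ∈ I i
        · have : DFinsupp.single i (intervalMap 𝕜 (I i) hab c) = (c : 𝕜) • v ⟨i, h⟩ := by
            simp only [v]
            rw [← DFinsupp.single_smul]
            congr 1
            apply Subtype.ext
            rw [intervalMap_of_mem hab h]
            simp
          rw [this]
          exact Submodule.smul_mem _ _ (Submodule.subset_span ⟨_, rfl⟩)
        · rw [intervalMap_of_not hab h]
          simp
    · rw [Submodule.span_le]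
      rintro _ ⟨j, rfl⟩
      refine ⟨DFinsupp.single j.1 ⟨1, fun h => absurd j.2.1 h⟩, ?_⟩
      have hg : ∀ c, g (DFinsupp.single j.1 c) = DFinsupp.single j.1 (intervalMap 𝕜 (I j.1) hab c) := by
        intro c
        simp [g]
      rw [hg]
      simp only [v]
      congr 1
      apply Subtype.ext
      rw [intervalMap_of_mem hab j.2]
  have hmap : Submodule.map eb.toLinearMap (LinearMap.range (M.map hab)) = LinearMap.range g := by
    ext z
    constructor
    · rintro ⟨_, ⟨y, rfl⟩, rfl⟩
      exact ⟨ea y, (hcomm y).symm⟩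
    · rintro ⟨y, rfl⟩
      refine ⟨_, ⟨ea.symm y, rfl⟩, ?_⟩
      show eb _ = _
      rw [hcomm, LinearEquiv.apply_symm_apply]
  have hrank := (eb.submoduleMap (LinearMap.range (M.map hab))).lift_rank_eq
  rw [hmap, hspan, rank_span hv] at hrank
  have hcard : Cardinal.lift.{0} (Cardinal.mk (Set.range v)) = Cardinal.lift.{v} (Cardinal.mk J) :=
    Cardinal.mk_range_eq_of_injective hv.injective
  have hk : (k : Cardinal) ≤ M.rankInv hab ↔ (k : Cardinal) ≤ Cardinal.mk J := by
    unfold rankInv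
    rw [← Cardinal.nat_le_lift_iff, hrank, Cardinal.nat_le_lift_iff]
    rw [Cardinal.lift_uzero] at hcard
    rw [hcard, Cardinal.nat_le_lift_iff]
  rw [hk, Cardinal.le_mk_iff_exists_subset]
  constructor
  · rintro ⟨p, hpJ, hp⟩
    obtain ⟨s, rfl, hs⟩ := Cardinal.mk_set_eq_nat_iff_finset.1 hp
    exact ⟨s, hs, fun j hj => hpJ hj⟩
  · rintro ⟨s, hs, h⟩
    exact ⟨(s : Set ι), fun j hj => h j hj, by simp [hs]⟩

/-- For an interval decomposable `n`-parameter persistence module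
`M ≅ ⨁_j 𝟙^{I_j}`, the uniform persistence `∞`-landscape is the pointwise `k`-th
maximum of the landscapes of the interval summands:
`λ_∞(M)(k,x) = kmax_j λ_∞(𝟙^{I_j})(1,x)`. -/
theorem landscapeInfty_eq_kmax {n : ℕ} {𝕜 : Type v} [Field 𝕜]
    (M : PersistenceModule (Fin n → ℝ) 𝕜)
    {ι : Type} (I : ι → Set (Fin n → ℝ)) (hI : ∀ j, IsInterval (I j))
    (hdec : Nonempty (PersIso M (dirSum fun j => intervalModule 𝕜 (I j) (hI j).1)))
    (k : ℕ) (x : Fin n → ℝ) :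
    landscapeInfty M k x
      = kmax (fun j => landscapeInfty (intervalModule 𝕜 (I j) (hI j).1) 1 x) k := by
  obtain ⟨e⟩ := hdec
  have hb : ∀ {n : ℕ} (x h : Fin n → ℝ) (ε : ℝ), ENNReal.ofReal ‖h‖ ≤ ENNReal.ofReal ε →
      0 ≤ ε → h ≤ fun _ => ε := by
    intro n x h ε hle hε i
    have h1 := (ENNReal.ofReal_le_ofReal_iff hε).1 hle
    exact (le_abs_self _).trans ((norm_le_pi_norm h i).trans h1)
  apply le_antisymm
  · apply sSup_le
    intro ε hε
    apply ENNReal.le_of_forall_nnreal_lt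
    intro r hr
    let c : Fin n → ℝ := fun _ => (r : ℝ)
    have hc0 : 0 ≤ c := fun _ => r.2
    have hcn : ‖c‖ ≤ r := (pi_norm_le_iff_of_nonneg r.2).2 (fun i => by simp [c])
    have hcr : ENNReal.ofReal ‖c‖ ≤ r := by
      rw [← ENNReal.ofReal_coe_nnreal]
      exact ENNReal.ofReal_le_ofReal hcn
    obtain ⟨s, hs, hsI⟩ := (le_rank_iff M I hI e k _).1 (hε c hc0 (hcr.trans hr.le))
    refine le_sSup ⟨s, hs, fun j hj => le_sSup ?_⟩
    intro h hh hhr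
    rw [one_le_rank_interval]
    have hhc : h ≤ c := hb x h r (by rw [ENNReal.ofReal_coe_nnreal]; exact hhr) r.2
    obtain ⟨h1, h2⟩ := hsI j hj
    have h3 : x - c ≤ x - h := sub_le_sub_left hhc x
    have h4 : x + h ≤ x + c := add_le_add_right hhc x
    have h5 := sub_le_add_self hh (x := x)
    exact ⟨(hI j).1 h1 h2 h3 (h5.trans h4), (hI j).1 h1 h2 (h3.trans h5) h4⟩
  · apply sSup_le
    rintro ε ⟨s, hs, hsε⟩
    apply le_of_forall_lt
    intro δ hδ
    obtain ⟨δ', hδ1, hδ2⟩ := exists_between hδ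
    refine hδ1.trans_le (le_sSup ?_)
    intro h hh hhδ
    rw [le_rank_iff M I hI e]
    refine ⟨s, hs, fun j hj => ?_⟩
    obtain ⟨η, hη, hlt⟩ := lt_sSup_iff.1 (hδ2.trans_le (hsε j hj))
    exact (one_le_rank_interval (hI j).1 _).1 (hη h hh (hhδ.trans hlt.le))

end PersistenceModule
end

section
/- Rescaling commutativity: let w ∈ ℝ^n with w_i > 0 for all i and ‖w‖_∞ = 1, let φ_w(x) = (w_i x_i)_i be the corresponding rescaling of ℝ^n, and let λ_w denote the w-weighted persistence landscape. Then for every n-parameter persistence module M, k ∈ ℕ and x ∈ ℝ^n, λ_w(M ∘ φ_w)(k, x) = λ_𝟏(M)(k, φ_w(x)); that is, the w-weighted landscape of the pullback of M along φ_w equals the pullback along id × φ_w of the uniform (1-weighted) landscape of M. -/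
open scoped ENNReal NNReal BigOperators

universe u v w

namespace PersistenceModule

lemma rankInv_congr_aux {P : Type u} [Preorder P] {𝕜 : Type v} [Field 𝕜]
    (M : PersistenceModule P 𝕜) {a b a' b' : P} (ha : a = a') (hb : b = b')
    (hab : a ≤ b) (hab' : a' ≤ b') : M.rankInv hab = M.rankInv hab' := by
  subst ha
  subst hb
  rfl

/-- Rescaling commutativity: for a weighting vector `w` (with
`w_i > 0` and `‖w‖_∞ = 1`) and the rescaling `φ_w(x) = (w_i x_i)_i`, the `w`-weighted
persistence landscape of the pullback `M ∘ φ_w` equals the pullback along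
`id × φ_w` of the uniform (`𝟏`-weighted) landscape of `M`:
`λ_w(M ∘ φ_w)(k, x) = λ_𝟏(M)(k, φ_w(x))`. -/
theorem landscapeW_rescaling {n : ℕ} {𝕜 : Type v} [Field 𝕜]
    (M : PersistenceModule (Fin n → ℝ) 𝕜)
    (w : Fin n → ℝ) (hw : ∀ i, 0 < w i) (hw1 : ‖w‖ = 1)
    (k : ℕ) (x : Fin n → ℝ) :
    landscapeW w
      (reindex (fun (y : Fin n → ℝ) (i : Fin n) => w i * y i)
        (fun _ _ hyz i => mul_le_mul_of_nonneg_left (hyz i) (hw i).le) M) k x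
      = landscapeInfty M k (fun i => w i * x i) := by
  unfold landscapeW landscapeInfty landscapeBy
  congr 1
  ext ε
  simp only [Set.mem_ofPred_eq]
  have key : ∀ (hφ : Monotone (fun (y : Fin n → ℝ) (i : Fin n) => w i * y i)) (h : Fin n → ℝ) (hh : 0 ≤ h) (hh' : 0 ≤ (fun i => w i * h i)),
      (reindex (fun (y : Fin n → ℝ) (i : Fin n) => w i * y i) hφ M).rankInv
          (sub_le_add_self hh (x := x))
        = M.rankInv (sub_le_add_self hh' (x := fun i => w i * x i)) := by
    intro hφ h hh hh'
    refine rankInv_congr_aux M (a := fun i => w i * (x - h) i)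
      (b := fun i => w i * (x + h) i) ?_ ?_
      (fun i => mul_le_mul_of_nonneg_left (sub_le_add_self hh (x := x) i) (hw i).le) _
    · funext i
      simp [mul_sub]
    · funext i
      simp [mul_add]
  constructor
  · intro H h hh hε
    have e : (fun i => w i * (h i / w i)) = h := by
      funext i
      exact mul_div_cancel₀ (h i) (hw i).ne'
    have hg : (0 : Fin n → ℝ) ≤ fun i => h i / w i := fun i => div_nonneg (hh i) (hw i).le
    have hwg : (0 : Fin n → ℝ) ≤ fun i => w i * (h i / w i) := by rw [e]; exact hh
    have h1 := H (fun i => h i / w i) hg (by unfold wnorm; rw [e]; exact hε)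
    have hφ : Monotone (fun (y : Fin n → ℝ) (i : Fin n) => w i * y i) :=
      fun _ _ hyz i => mul_le_mul_of_nonneg_left (hyz i) (hw i).le
    refine (h1.trans_eq (key hφ _ hg hwg)).trans_eq (rankInv_congr_aux M ?_ ?_ _ _)
    · rw [e]
    · rw [e]
  · intro H h hh hε
    have hh' : (0 : Fin n → ℝ) ≤ fun i => w i * h i := fun i => mul_nonneg (hw i).le (hh i)
    have hφ : Monotone (fun (y : Fin n → ℝ) (i : Fin n) => w i * y i) :=
      fun _ _ hyz i => mul_le_mul_of_nonneg_left (hyz i) (hw i).le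
    exact (H _ hh' hε).trans_eq (key hφ h hh hh').symm

end PersistenceModule
end

section
/- Properties of the single parameter persistence landscape: for any single parameter persistence module M with landscape λ, for every k ∈ ℕ and t ∈ ℝ one has (1) λ(k,t) ≥ 0, (2) λ(k,t) ≥ λ(k+1,t), and (3) for each fixed k the function t ↦ λ(k,t) is 1-Lipschitz. -/
open scoped ENNReal NNReal BigOperators

universe u v w

namespace PersistenceModule

/-- The rank invariant decreases when the interval grows. -/
lemma rankInv_anti {P : Type u} [Preorder P] {𝕜 : Type v} [Field 𝕜]
    (M : PersistenceModule P 𝕜) {a a' b' b : P} (h₁ : a ≤ a') (h₂ : a' ≤ b') (h₃ : b' ≤ b)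
    (h : a ≤ b) : M.rankInv h ≤ M.rankInv h₂ := by
  have e : M.map h = (M.map h₃).comp ((M.map h₂).comp (M.map h₁)) := by
    rw [← M.map_comp h₁ h₂, ← M.map_comp (h₁.trans h₂) h₃]
  unfold rankInv
  rw [e]
  exact (LinearMap.rank_comp_le_right _ _).trans (LinearMap.rank_comp_le_left _ _)

/-- Properties of the single parameter persistence landscape: for any
single parameter persistence module `M` with landscape `λ`, every `k ∈ ℕ` and `t ∈ ℝ`:
(1) `λ(k,t) ≥ 0`; (2) `λ(k,t) ≥ λ(k+1,t)`; (3) for fixed `k`, `t ↦ λ(k,t)` is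
1-Lipschitz (stated as `λ(k,s) ≤ λ(k,u) + |s − u|` for all `s, u`). -/
theorem landscape1_properties {𝕜 : Type v} [Field 𝕜]
    (M : PersistenceModule ℝ 𝕜) (k : ℕ) (t : ℝ) :
    0 ≤ M.landscape1 k t ∧
    M.landscape1 (k + 1) t ≤ M.landscape1 k t ∧
    (∀ s u : ℝ, M.landscape1 k s ≤ M.landscape1 k u + ENNReal.ofReal |s - u|) := by
  refine ⟨zero_le, ?_, ?_⟩
  · unfold landscape1
    apply sSup_le_sSup
    apply Set.image_mono
    rintro h ⟨hh, hk⟩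
    exact ⟨hh, le_trans (by exact_mod_cast Nat.le_succ k) hk⟩
  · intro s u
    conv_lhs => unfold landscape1
    apply sSup_le
    rintro _ ⟨h, ⟨hh, hk⟩, rfl⟩
    rcases le_total h |s - u| with hle | hle
    · exact (ENNReal.ofReal_le_ofReal hle).trans le_add_self
    · have h0 : 0 ≤ h - |s - u| := sub_nonneg.2 hle
      have key : ENNReal.ofReal (h - |s - u|) ≤ M.landscape1 k u := by
        unfold landscape1
        apply le_sSup
        refine ⟨_, ⟨h0, hk.trans (rankInv_anti M ?_ _ ?_ _)⟩, rfl⟩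
        · linarith [le_abs_self (s - u)]
        · linarith [neg_abs_le (s - u)]
      calc ENNReal.ofReal h = ENNReal.ofReal (h - |s - u|) + ENNReal.ofReal |s - u| := by
            rw [← ENNReal.ofReal_add h0 (abs_nonneg _), sub_add_cancel]
        _ ≤ _ := by gcongr

end PersistenceModule
end

section
/- The bottleneck distance bounds the interleaving distance: for interval decomposable n-parameter persistence modules M and N, d^ω(M,N) ≤ d_B(M,N), where d^ω is the interleaving distance with respect to ω_Γ = ‖Γ − id‖_∞ and d_B is the bottleneck distance; moreover this inequality can be strict: there exist rectangle decomposable 2-parameter modules M, N that are 1-interleaved but admit no ε-matching for any ε < 3. -/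
open scoped ENNReal NNReal BigOperators

universe u v w

namespace PersistenceModule

variable {n : ℕ}

/-- An `ε`-matching between two barcodes `{I_j}` and `{I'_κ}`: a partial bijection
matching intervals whose interval modules are within interleaving distance `ε`, such
that all unmatched interval modules are within interleaving distance `ε` of `0`. -/
def IsEpsMatching (𝕜 : Type v) [Field 𝕜] {J K : Type}
    (I : J → Set (Fin n → ℝ)) (I' : K → Set (Fin n → ℝ))
    (hI : ∀ j, IntervalConvex (I j)) (hI' : ∀ κ, IntervalConvex (I' κ))
    (ε : ℝ≥0∞) : Prop :=
  ∃ (J' : Set J) (K' : Set K) (e : J' ≃ K'),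
    (∀ j : J', interleavingDist (intervalModule 𝕜 (I j) (hI j))
        (intervalModule 𝕜 (I' (e j)) (hI' (e j))) ≤ ε) ∧
    (∀ j : J, j ∉ J' → interleavingDist (intervalModule 𝕜 (I j) (hI j))
        (zeroMod.{0, v, v} (Fin n → ℝ) 𝕜) ≤ ε) ∧
    (∀ κ : K, κ ∉ K' → interleavingDist (zeroMod.{0, v, v} (Fin n → ℝ) 𝕜)
        (intervalModule 𝕜 (I' κ) (hI' κ)) ≤ ε)

/-- The bottleneck distance between two barcodes: the infimum of `ε ≥ 0` such that
the barcodes admit an `ε`-matching. -/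
noncomputable def bottleneckDist (𝕜 : Type v) [Field 𝕜] {J K : Type}
    (I : J → Set (Fin n → ℝ)) (I' : K → Set (Fin n → ℝ))
    (hI : ∀ j, IntervalConvex (I j)) (hI' : ∀ κ, IntervalConvex (I' κ)) : ℝ≥0∞ :=
  sInf {ε : ℝ≥0∞ | IsEpsMatching 𝕜 I I' hI hI' ε}

section Helpers

/-- Uniform shift. -/
def shf {n : ℕ} (δ : ℝ) (x : Fin n → ℝ) : Fin n → ℝ := fun i => x i + δ

lemma shf_mono {n : ℕ} (δ : ℝ) : Monotone (shf (n := n) δ) := fun x y h i => by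
  have := h i
  simp only [shf]; linarith

lemma le_shf {n : ℕ} {δ : ℝ} (hδ : 0 ≤ δ) (x : Fin n → ℝ) : x ≤ shf δ x := fun i => by
  simp only [shf]; linarith

/-- Interleaving by a uniform shift. -/
abbrev SInt {n : ℕ} {𝕜 : Type v} [Field 𝕜] (δ : ℝ) (hδ : 0 ≤ δ)
    (M N : PersistenceModule (Fin n → ℝ) 𝕜) :=
  Interleaving M N (shf δ) (shf δ) (shf_mono δ) (le_shf hδ) (shf_mono δ) (le_shf hδ)

lemma map_map {P : Type u} [Preorder P] {𝕜 : Type v} [Field 𝕜] (M : PersistenceModule P 𝕜)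
    {a b c : P} (hab : a ≤ b) (hbc : b ≤ c) (x : M.obj a) :
    M.map hbc (M.map hab x) = M.map (hab.trans hbc) x := by
  rw [M.map_comp hab hbc]; rfl

lemma dist_le_of_sint {n : ℕ} {𝕜 : Type v} [Field 𝕜] (δ : ℝ) (hδ : 0 ≤ δ)
    (M N : PersistenceModule (Fin n → ℝ) 𝕜) (h : SInt δ hδ M N) :
    interleavingDist M N ≤ ENNReal.ofReal δ := by
  have hb : (⨆ x : Fin n → ℝ, ENNReal.ofReal ‖shf δ x - x‖) ≤ ENNReal.ofReal δ := by
    refine iSup_le fun x => ENNReal.ofReal_le_ofReal ?_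
    rw [pi_norm_le_iff_of_nonneg hδ]
    intro i
    simp [shf, abs_of_nonneg hδ]
  exact sInf_le ⟨shf δ, shf δ, shf_mono δ, le_shf hδ, shf_mono δ, le_shf hδ, ⟨h⟩, hb, hb⟩

lemma sint_of_dist_lt {n : ℕ} {𝕜 : Type v} [Field 𝕜] (δ : ℝ) (hδ : 0 ≤ δ)
    (M N : PersistenceModule (Fin n → ℝ) 𝕜) (h : interleavingDist M N < ENNReal.ofReal δ) :
    Nonempty (SInt δ hδ M N) := by
  unfold interleavingDist interleavingDistBy at h
  rw [sInf_lt_iff] at h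
  obtain ⟨ε, ⟨Γ, K, hΓ, hΓi, hK, hKi, ⟨F⟩, h1, h2⟩, hε⟩ := h
  have key : ∀ G : (Fin n → ℝ) → (Fin n → ℝ),
      (⨆ x, ENNReal.ofReal ‖G x - x‖) ≤ ε → ∀ x, G x ≤ shf δ x := by
    intro G hG x i
    have h3 : ENNReal.ofReal ‖G x - x‖ ≤ ENNReal.ofReal δ :=
      ((le_iSup (fun x => ENNReal.ofReal ‖G x - x‖) x).trans hG).trans hε.le
    rw [ENNReal.ofReal_le_ofReal_iff hδ] at h3
    have h4 := (norm_le_pi_norm (G x - x) i).trans h3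
    have h5 := (le_abs_self _).trans h4
    simp only [Pi.sub_apply] at h5
    simp only [shf]; linarith
  have gΓ := key Γ h1
  have gK := key K h2
  refine ⟨⟨fun a => (N.map (gΓ a)).comp (F.φ a), fun a => (M.map (gK a)).comp (F.ψ a),
    ?_, ?_, ?_, ?_⟩⟩
  · intro a b hab
    ext x
    have := LinearMap.congr_fun (F.φ_nat hab) x
    simp only [LinearMap.comp_apply] at this ⊢
    rw [this, map_map, map_map]
  · intro a b hab
    ext x
    have := LinearMap.congr_fun (F.ψ_nat hab) x
    simp only [LinearMap.comp_apply] at this ⊢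
    rw [this, map_map, map_map]
  · intro a
    ext x
    have h1 := LinearMap.congr_fun (F.ψ_nat (gΓ a)) (F.φ a x)
    have h2 := LinearMap.congr_fun (F.comm₁ a) x
    simp only [LinearMap.comp_apply] at h1 h2 ⊢
    rw [h1, h2, map_map, map_map]
  · intro a
    ext x
    have h1 := LinearMap.congr_fun (F.φ_nat (gK a)) (F.ψ a x)
    have h2 := LinearMap.congr_fun (F.comm₂ a) x
    simp only [LinearMap.comp_apply] at h1 h2 ⊢
    rw [h1, h2, map_map, map_map]

/-- Transport along isomorphisms. -/
lemma sint_iso {n : ℕ} {𝕜 : Type v} [Field 𝕜] (δ : ℝ) (hδ : 0 ≤ δ)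
    {M N M' N' : PersistenceModule (Fin n → ℝ) 𝕜}
    (e : PersIso M M') (f : PersIso N N') (F : SInt δ hδ M' N') :
    Nonempty (SInt δ hδ M N) := by
  have es : ∀ {a b : Fin n → ℝ} (hab : a ≤ b) (x : M'.obj a),
      (e.e b).symm (M'.map hab x) = M.map hab ((e.e a).symm x) := by
    intro a b hab x
    rw [LinearEquiv.symm_apply_eq, e.comm, LinearEquiv.apply_symm_apply]
  have fs : ∀ {a b : Fin n → ℝ} (hab : a ≤ b) (x : N'.obj a),
      (f.e b).symm (N'.map hab x) = N.map hab ((f.e a).symm x) := by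
    intro a b hab x
    rw [LinearEquiv.symm_apply_eq, f.comm, LinearEquiv.apply_symm_apply]
  refine ⟨⟨fun a => ((f.e (shf δ a)).symm.toLinearMap.comp (F.φ a)).comp (e.e a).toLinearMap,
    fun a => ((e.e (shf δ a)).symm.toLinearMap.comp (F.ψ a)).comp (f.e a).toLinearMap,
    ?_, ?_, ?_, ?_⟩⟩
  · intro a b hab
    ext x
    have := LinearMap.congr_fun (F.φ_nat hab) (e.e a x)
    simp only [LinearMap.comp_apply, LinearEquiv.coe_coe] at this ⊢
    rw [e.comm, this, fs]
  · intro a b hab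
    ext x
    have := LinearMap.congr_fun (F.ψ_nat hab) (f.e a x)
    simp only [LinearMap.comp_apply, LinearEquiv.coe_coe] at this ⊢
    rw [f.comm, this, es]
  · intro a
    ext x
    have := LinearMap.congr_fun (F.comm₁ a) (e.e a x)
    simp only [LinearMap.comp_apply, LinearEquiv.coe_coe, LinearEquiv.apply_symm_apply] at this ⊢
    rw [this, es, LinearEquiv.symm_apply_apply]
  · intro a
    ext x
    have := LinearMap.congr_fun (F.comm₂ a) (f.e a x)
    simp only [LinearMap.comp_apply, LinearEquiv.coe_coe, LinearEquiv.apply_symm_apply] at this ⊢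
    rw [this, fs, LinearEquiv.symm_apply_apply]

open Classical in
/-- The linear map of direct sums induced by a partial matching `R` and maps on matched pairs. -/
noncomputable def matchMap {𝕜 : Type v} [Field 𝕜] {J K : Type} {A : J → Type*} {B : K → Type*}
    [∀ j, AddCommGroup (A j)] [∀ j, Module 𝕜 (A j)]
    [∀ j, AddCommGroup (B j)] [∀ j, Module 𝕜 (B j)]
    (R : J → K → Prop) (F : ∀ j k, R j k → (A j →ₗ[𝕜] B k)) : (Π₀ j, A j) →ₗ[𝕜] (Π₀ k, B k) :=
  DFinsupp.lsum ℕ (fun j => if h : ∃ k, R j k then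
    (DFinsupp.lsingle h.choose).comp (F j h.choose h.choose_spec) else 0)

open Classical in
lemma matchMap_single {𝕜 : Type v} [Field 𝕜] {J K : Type} {A : J → Type*} {B : K → Type*}
    [∀ j, AddCommGroup (A j)] [∀ j, Module 𝕜 (A j)]
    [∀ j, AddCommGroup (B j)] [∀ j, Module 𝕜 (B j)]
    (R : J → K → Prop) (F : ∀ j k, R j k → (A j →ₗ[𝕜] B k))
    (hu : ∀ j k k', R j k → R j k' → k = k') {j : J} {k : K} (h : R j k) (x : A j) :
    matchMap R F (DFinsupp.single j x) = DFinsupp.single k (F j k h x) := by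
  have hex : ∃ k, R j k := ⟨k, h⟩
  have := hu j _ _ h hex.choose_spec
  subst this
  simp [matchMap, DFinsupp.lsum_single, dif_pos hex]

open Classical in
lemma matchMap_single_none {𝕜 : Type v} [Field 𝕜] {J K : Type} {A : J → Type*} {B : K → Type*}
    [∀ j, AddCommGroup (A j)] [∀ j, Module 𝕜 (A j)]
    [∀ j, AddCommGroup (B j)] [∀ j, Module 𝕜 (B j)]
    (R : J → K → Prop) (F : ∀ j k, R j k → (A j →ₗ[𝕜] B k))
    {j : J} (h : ¬ ∃ k, R j k) (x : A j) :
    matchMap R F (DFinsupp.single j x) = 0 := by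
  simp only [matchMap, DFinsupp.lsum_single, dif_neg h, LinearMap.zero_apply]

open Classical in
lemma dirSum_map_single {P : Type u} [Preorder P] {𝕜 : Type v} [Field 𝕜] {J : Type}
    (A : J → PersistenceModule P 𝕜) {a b : P} (hab : a ≤ b) (j : J) (x : (A j).obj a) :
    (dirSum A).map hab (DFinsupp.single j x : Π₀ j, (A j).obj a) =
      (DFinsupp.single j ((A j).map hab x) : Π₀ j, (A j).obj b) := by
  change DFinsupp.mapRange.linearMap (fun i => (A i).map hab) (DFinsupp.single j x) = _
  simp

open Classical in
/-- Direct sums of interleaved families are interleaved. -/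
lemma sint_dirSum {n : ℕ} {𝕜 : Type v} [Field 𝕜] (δ : ℝ) (hδ : 0 ≤ δ) {J K : Type}
    (A : J → PersistenceModule (Fin n → ℝ) 𝕜) (B : K → PersistenceModule (Fin n → ℝ) 𝕜)
    (R : J → K → Prop) (hu : ∀ j k k', R j k → R j k' → k = k')
    (hu' : ∀ k j j', R j k → R j' k → j = j')
    (F : ∀ j k, R j k → SInt δ hδ (A j) (B k))
    (hA : ∀ j, (¬ ∃ k, R j k) → ∀ a (h : a ≤ shf δ (shf δ a)) x, (A j).map h x = 0)
    (hB : ∀ k, (¬ ∃ j, R j k) → ∀ a (h : a ≤ shf δ (shf δ a)) x, (B k).map h x = 0) :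
    Nonempty (SInt δ hδ (dirSum A) (dirSum B)) := by
  let f : ∀ a, (Π₀ j, (A j).obj a) →ₗ[𝕜] (Π₀ k, (B k).obj (shf δ a)) := fun a =>
    matchMap R (fun j k h => (F j k h).φ a)
  let g : ∀ a, (Π₀ k, (B k).obj a) →ₗ[𝕜] (Π₀ j, (A j).obj (shf δ a)) := fun a =>
    matchMap (fun k j => R j k) (fun k j h => (F j k h).ψ a)
  have f1 : ∀ a j k (h : R j k) x, f a (DFinsupp.single j x) =
      DFinsupp.single k ((F j k h).φ a x) := fun a j k h x =>
        matchMap_single R (fun j k h => (F j k h).φ a) hu h x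
  have f0 : ∀ a j (h : ¬ ∃ k, R j k) x, f a (DFinsupp.single j x) = 0 :=
    fun a j h x => matchMap_single_none R (fun j k h => (F j k h).φ a) h x
  have g1 : ∀ a j k (h : R j k) x, g a (DFinsupp.single k x) =
      DFinsupp.single j ((F j k h).ψ a x) := fun a j k h x =>
        matchMap_single (fun k j => R j k) (fun k j h => (F j k h).ψ a) hu' h x
  have g0 : ∀ a k (h : ¬ ∃ j, R j k) x, g a (DFinsupp.single k x) = 0 :=
    fun a k h x => matchMap_single_none (fun k j => R j k)
      (fun k j h => (F j k h).ψ a) h x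
  refine ⟨⟨f, g, ?_, ?_, ?_, ?_⟩⟩
  · intro a b hab
    refine DFinsupp.lhom_ext fun j x => ?_
    change f b ((dirSum A).map hab (DFinsupp.single j x : Π₀ j, (A j).obj a)) =
      (dirSum B).map _ (f a (DFinsupp.single j x))
    rw [dirSum_map_single]
    by_cases h : ∃ k, R j k
    · obtain ⟨k, h⟩ := h
      rw [f1 _ _ _ h, f1 _ _ _ h, dirSum_map_single]
      have := LinearMap.congr_fun ((F j k h).φ_nat hab) x
      simp only [LinearMap.comp_apply] at this
      rw [this]
    · rw [f0 _ _ h, f0 _ _ h]; exact (map_zero _).symm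
  · intro a b hab
    refine DFinsupp.lhom_ext fun k x => ?_
    change g b ((dirSum B).map hab (DFinsupp.single k x : Π₀ j, (B j).obj a)) =
      (dirSum A).map _ (g a (DFinsupp.single k x))
    rw [dirSum_map_single]
    by_cases h : ∃ j, R j k
    · obtain ⟨j, h⟩ := h
      rw [g1 _ _ _ h, g1 _ _ _ h, dirSum_map_single]
      have := LinearMap.congr_fun ((F j k h).ψ_nat hab) x
      simp only [LinearMap.comp_apply] at this
      rw [this]
    · rw [g0 _ _ h, g0 _ _ h]; exact (map_zero _).symm
  · intro a
    refine DFinsupp.lhom_ext fun j x => ?_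
    change g _ (f a (DFinsupp.single j x)) =
      (dirSum A).map _ (DFinsupp.single j x : Π₀ j, (A j).obj a)
    rw [dirSum_map_single]
    by_cases h : ∃ k, R j k
    · obtain ⟨k, h⟩ := h
      rw [f1 _ _ _ h, g1 _ _ _ h]
      have := LinearMap.congr_fun ((F j k h).comm₁ a) x
      simp only [LinearMap.comp_apply] at this
      rw [this]
    · rw [f0 _ _ h, hA _ h, map_zero, DFinsupp.single_zero]
  · intro a
    refine DFinsupp.lhom_ext fun k x => ?_
    change f _ (g a (DFinsupp.single k x)) =
      (dirSum B).map _ (DFinsupp.single k x : Π₀ j, (B j).obj a)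
    rw [dirSum_map_single]
    by_cases h : ∃ j, R j k
    · obtain ⟨j, h⟩ := h
      rw [g1 _ _ _ h, f1 _ _ _ h]
      have := LinearMap.congr_fun ((F j k h).comm₂ a) x
      simp only [LinearMap.comp_apply] at this
      rw [this]
    · rw [g0 _ _ h, hB _ h, map_zero, DFinsupp.single_zero]

lemma part_one {n : ℕ} (𝕜 : Type v) [Field 𝕜] {J K : Type}
    (I : J → Set (Fin n → ℝ)) (I' : K → Set (Fin n → ℝ))
    (hI : ∀ j, IntervalConvex (I j)) (hI' : ∀ κ, IntervalConvex (I' κ))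
    (M N : PersistenceModule (Fin n → ℝ) 𝕜)
    (eM : PersIso M (dirSum fun j => intervalModule 𝕜 (I j) (hI j)))
    (eN : PersIso N (dirSum fun κ => intervalModule 𝕜 (I' κ) (hI' κ))) :
    interleavingDist M N ≤ bottleneckDist 𝕜 I I' hI hI' := by
  refine le_sInf fun ε hε => ?_
  obtain ⟨J', K', e, h1, h2, h3⟩ := hε
  refine le_of_forall_gt_imp_ge_of_dense fun c hc => ?_
  by_cases hct : c = ⊤
  · rw [hct]; exact le_top
  obtain ⟨δ, hδ, rfl⟩ : ∃ δ : ℝ, 0 ≤ δ ∧ c = ENNReal.ofReal δ :=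
    ⟨c.toReal, ENNReal.toReal_nonneg, (ENNReal.ofReal_toReal hct).symm⟩
  let R : J → K → Prop := fun j k => ∃ h : j ∈ J', (e ⟨j, h⟩ : K) = k
  have hF : ∀ j k, R j k → Nonempty (SInt δ hδ (intervalModule 𝕜 (I j) (hI j))
      (intervalModule 𝕜 (I' k) (hI' k))) := by
    rintro j k ⟨h, rfl⟩
    exact sint_of_dist_lt δ hδ _ _ ((h1 ⟨j, h⟩).trans_lt hc)
  have hu' : ∀ k j j', R j k → R j' k → j = j' := by
    rintro k j j' ⟨h, rfl⟩ ⟨h', h''⟩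
    have := e.injective (Subtype.ext h'')
    exact (congrArg Subtype.val this).symm
  obtain ⟨F⟩ := sint_dirSum δ hδ (fun j => intervalModule 𝕜 (I j) (hI j))
    (fun κ => intervalModule 𝕜 (I' κ) (hI' κ)) R
    (by rintro j k k' ⟨h, rfl⟩ ⟨h', rfl⟩; rfl) hu' (fun j k h => (hF j k h).some)
    (by
      intro j hj a h x
      have hj' : j ∉ J' := fun h => hj ⟨_, h, rfl⟩
      obtain ⟨G⟩ := sint_of_dist_lt δ hδ _ _ ((h2 j hj').trans_lt hc)
      have := LinearMap.congr_fun (G.comm₁ a) x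
      refine this.symm.trans ?_
      rw [LinearMap.comp_apply]
      exact (congrArg _ (Subsingleton.elim (α := PUnit) _ 0)).trans (map_zero _))
    (by
      intro k hk a h x
      have hk' : k ∉ K' := fun h => hk ⟨e.symm ⟨k, h⟩, (e.symm ⟨k, h⟩).2, by simp⟩
      obtain ⟨G⟩ := sint_of_dist_lt δ hδ _ _ ((h3 k hk').trans_lt hc)
      have := LinearMap.congr_fun (G.comm₂ a) x
      refine this.symm.trans ?_
      rw [LinearMap.comp_apply]
      exact (congrArg _ (Subsingleton.elim (α := PUnit) _ 0)).trans (map_zero _))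
  obtain ⟨G⟩ := sint_iso δ hδ eM eN F
  exact dist_le_of_sint δ hδ M N G

open Classical in
lemma intervalMap_coe {P : Type u} [Preorder P] {𝕜 : Type v} [Field 𝕜] (I : Set P) {a b : P}
    (hab : a ≤ b) (x : intervalSubmodule 𝕜 I a) :
    ((intervalMap 𝕜 I hab x : intervalSubmodule 𝕜 I b) : 𝕜) = if b ∈ I then (x : 𝕜) else 0 := by
  unfold intervalMap
  by_cases hb : b ∈ I
  · by_cases ha : a ∈ I
    · rw [dif_pos ⟨ha, hb⟩, if_pos hb]; rfl
    · rw [dif_neg (by tauto), if_pos hb, x.2 ha]; rfl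
  · rw [dif_neg (by tauto), if_neg hb]; rfl

open Classical in
/-- The linear map between direct sums of interval modules given by a matrix. -/
noncomputable def matMap {P : Type u} {𝕜 : Type v} [Preorder P] [Field 𝕜] {J K : Type}
    [Fintype J] [Fintype K]
    (I : J → Set P) (I' : K → Set P) (c : K → J → 𝕜) (a b : P) :
    (Π₀ j, intervalSubmodule 𝕜 (I j) a) →ₗ[𝕜] (Π₀ k, intervalSubmodule 𝕜 (I' k) b) where
  toFun x := DFinsupp.equivFunOnFintype.symm fun k =>
    ⟨if b ∈ I' k then ∑ j, c k j * (x j : 𝕜) else 0, fun h => if_neg h⟩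
  map_add' x y := by
    refine DFinsupp.ext fun k => Subtype.ext ?_
    change (if b ∈ I' k then ∑ j, c k j * ((x j : 𝕜) + (y j : 𝕜)) else 0) =
      (if b ∈ I' k then ∑ j, c k j * (x j : 𝕜) else 0) +
        (if b ∈ I' k then ∑ j, c k j * (y j : 𝕜) else 0)
    by_cases h : b ∈ I' k <;> simp [h, mul_add, Finset.sum_add_distrib]
  map_smul' r x := by
    refine DFinsupp.ext fun k => Subtype.ext ?_
    change (if b ∈ I' k then ∑ j, c k j * (r * (x j : 𝕜)) else 0) =
      r * (if b ∈ I' k then ∑ j, c k j * (x j : 𝕜) else 0)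
    by_cases h : b ∈ I' k <;> simp [h, Finset.mul_sum, mul_left_comm]

open Classical in
lemma matMap_coe {P : Type u} {𝕜 : Type v} [Preorder P] [Field 𝕜] {J K : Type}
    [Fintype J] [Fintype K]
    (I : J → Set P) (I' : K → Set P) (c : K → J → 𝕜) (a b : P)
    (x : Π₀ j, intervalSubmodule 𝕜 (I j) a) (k : K) :
    ((matMap I I' c a b x k : intervalSubmodule 𝕜 (I' k) b) : 𝕜) =
      if b ∈ I' k then ∑ j, c k j * (x j : 𝕜) else 0 := rfl

/-- Open box. -/
def box {n : ℕ} (u v : Fin n → ℝ) : Set (Fin n → ℝ) := {x | ∀ i, x i ∈ Set.Ioo (u i) (v i)}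

lemma box_isInterval {n : ℕ} (u v : Fin n → ℝ) : IsInterval (box u v) := by
  constructor
  · intro s r t hs ht hsr hrt i
    exact ⟨(hs i).1.trans_le (hsr i), (hrt i).trans_lt (ht i).2⟩
  · intro s hs t ht
    have hm : s ⊓ t ∈ box u v := fun i =>
      ⟨lt_inf_iff.2 ⟨(hs i).1, (ht i).1⟩, (inf_le_left).trans_lt (hs i).2⟩
    exact (Relation.ReflTransGen.single ⟨hs, hm, Or.inr inf_le_left⟩).trans
      (Relation.ReflTransGen.single ⟨hm, ht, Or.inl inf_le_right⟩)

open Classical in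
lemma matMap_nat {n : ℕ} {𝕜 : Type v} [Field 𝕜] {J K : Type} [Fintype J] [Fintype K] (δ : ℝ)
    (u v : J → Fin n → ℝ) (u' v' : K → Fin n → ℝ) (c : K → J → 𝕜)
    (hc : ∀ k j, c k j ≠ 0 → (∀ i, u' k i ≤ u j i + δ) ∧ (∀ i, v' k i ≤ v j i + δ))
    {a b : Fin n → ℝ} (hab : a ≤ b) (x : Π₀ j, intervalSubmodule 𝕜 (box (u j) (v j)) a) (k : K) :
    (if shf δ b ∈ box (u' k) (v' k) then
      ∑ j, c k j * (if b ∈ box (u j) (v j) then (x j : 𝕜) else 0) else 0) =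
    if shf δ b ∈ box (u' k) (v' k) then
      (if shf δ a ∈ box (u' k) (v' k) then ∑ j, c k j * (x j : 𝕜) else 0) else 0 := by
  by_cases hb : shf δ b ∈ box (u' k) (v' k)
  · rw [if_pos hb, if_pos hb, ← mul_one (ite _ _ _), ite_mul, zero_mul, mul_one,
      ← Finset.sum_const_zero (s := (Finset.univ : Finset J)) , ← Finset.sum_ite_irrel]
    refine Finset.sum_congr rfl fun j _ => ?_
    by_cases h0 : c k j = 0
    · simp [h0]
    by_cases ha : a ∈ box (u j) (v j)
    · obtain ⟨h1, h2⟩ := hc k j h0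
      have hb' : b ∈ box (u j) (v j) := fun i => by
        have := (hb i).2; have := h2 i; have := (ha i).1; have := hab i
        simp only [shf] at *
        constructor <;> linarith
      have ha' : shf δ a ∈ box (u' k) (v' k) := fun i => by
        have := (hb i).2; have := h1 i; have := (ha i).1; have := hab i
        simp only [shf] at *
        constructor <;> linarith
      rw [if_pos hb', if_pos ha']
    · have : (x j : 𝕜) = 0 := (x j).2 ha
      simp [this]
  · rw [if_neg hb, if_neg hb]

open Classical in
lemma matMap_comm {n : ℕ} {𝕜 : Type v} [Field 𝕜] {J K : Type} [Fintype J] [Fintype K] (δ : ℝ)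
    (u v : J → Fin n → ℝ) (u' v' : K → Fin n → ℝ) (c : K → J → 𝕜) (d : J → K → 𝕜)
    (hc : ∀ k j, c k j ≠ 0 → (∀ i, u' k i ≤ u j i + δ) ∧ (∀ i, v' k i ≤ v j i + δ))
    (hd : ∀ j k, d j k ≠ 0 → (∀ i, u j i ≤ u' k i + δ) ∧ (∀ i, v j i ≤ v' k i + δ))
    (hdc : ∀ j l, ∑ k, d j k * c k l = if j = l then 1 else 0)
    (a : Fin n → ℝ) (x : Π₀ j, intervalSubmodule 𝕜 (box (u j) (v j)) a) (j : J) :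
    (if shf δ (shf δ a) ∈ box (u j) (v j) then
      ∑ k, d j k * (if shf δ a ∈ box (u' k) (v' k) then ∑ l, c k l * (x l : 𝕜) else 0) else 0) =
    if shf δ (shf δ a) ∈ box (u j) (v j) then (x j : 𝕜) else 0 := by
  by_cases hb : shf δ (shf δ a) ∈ box (u j) (v j)
  · rw [if_pos hb, if_pos hb]
    have h1 : ∀ k, d j k * (if shf δ a ∈ box (u' k) (v' k) then ∑ l, c k l * (x l : 𝕜) else 0)
        = ∑ l, (d j k * c k l) * (x l : 𝕜) := by
      intro k
      by_cases hs : shf δ a ∈ box (u' k) (v' k)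
      · rw [if_pos hs, Finset.mul_sum]
        exact Finset.sum_congr rfl fun l _ => by ring
      · rw [if_neg hs, mul_zero]
        symm
        refine Finset.sum_eq_zero fun l _ => ?_
        by_cases hd0 : d j k = 0
        · simp [hd0]
        by_cases hc0 : c k l = 0
        · simp [hc0]
        by_cases ha : a ∈ box (u l) (v l)
        · exfalso
          apply hs
          intro i
          have := (ha i).1; have := (hb i).2
          have := (hc k l hc0).1 i; have := (hd j k hd0).2 i
          simp only [shf] at *
          constructor <;> linarith
        · have : (x l : 𝕜) = 0 := (x l).2 ha
          simp [this]
    rw [Finset.sum_congr rfl fun k _ => h1 k, Finset.sum_comm]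
    simp_rw [← Finset.sum_mul, hdc]
    simp
  · rw [if_neg hb, if_neg hb]

open Classical in
lemma sint_of_matrices {n : ℕ} {𝕜 : Type v} [Field 𝕜] {J K : Type} [Fintype J] [Fintype K]
    (δ : ℝ) (hδ : 0 ≤ δ)
    (u v : J → Fin n → ℝ) (u' v' : K → Fin n → ℝ) (c : K → J → 𝕜) (d : J → K → 𝕜)
    (hc : ∀ k j, c k j ≠ 0 → (∀ i, u' k i ≤ u j i + δ) ∧ (∀ i, v' k i ≤ v j i + δ))
    (hd : ∀ j k, d j k ≠ 0 → (∀ i, u j i ≤ u' k i + δ) ∧ (∀ i, v j i ≤ v' k i + δ))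
    (hdc : ∀ j l, ∑ k, d j k * c k l = if j = l then 1 else 0)
    (hcd : ∀ k l, ∑ j, c k j * d j l = if k = l then 1 else 0) :
    Nonempty (SInt δ hδ
      (dirSum fun j => intervalModule 𝕜 (box (u j) (v j)) (box_isInterval (u j) (v j)).1)
      (dirSum fun k => intervalModule 𝕜 (box (u' k) (v' k)) (box_isInterval (u' k) (v' k)).1)) := by
  refine ⟨⟨fun a => matMap (fun j => box (u j) (v j)) (fun k => box (u' k) (v' k)) c a (shf δ a),
    fun a => matMap (fun k => box (u' k) (v' k)) (fun j => box (u j) (v j)) d a (shf δ a),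
    ?_, ?_, ?_, ?_⟩⟩
  · intro a b hab
    refine LinearMap.ext fun (x : (Π₀ j, intervalSubmodule 𝕜 (box (u j) (v j)) a)) =>
      DFinsupp.ext fun k => Subtype.ext ?_
    have h := matMap_nat δ u v u' v' c hc hab x k
    have e : ∀ j, (if b ∈ box (u j) (v j) then (x j : 𝕜) else 0) =
      ((intervalMap 𝕜 (box (u j) (v j)) hab (x j)) : 𝕜) := fun j => (intervalMap_coe _ hab _).symm
    simp only [e] at h
    refine Eq.trans h ?_
    exact (intervalMap_coe (box (u' k) (v' k)) (shf_mono δ hab)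
      (matMap (fun j => box (u j) (v j)) (fun k => box (u' k) (v' k)) c a (shf δ a) x k)).symm
  · intro a b hab
    refine LinearMap.ext fun (x : (Π₀ j, intervalSubmodule 𝕜 (box (u' j) (v' j)) a)) =>
      DFinsupp.ext fun k => Subtype.ext ?_
    have h := matMap_nat δ u' v' u v d hd hab x k
    have e : ∀ j, (if b ∈ box (u' j) (v' j) then (x j : 𝕜) else 0) =
      ((intervalMap 𝕜 (box (u' j) (v' j)) hab (x j)) : 𝕜) := fun j => (intervalMap_coe _ hab _).symm
    simp only [e] at h
    refine Eq.trans h ?_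
    exact (intervalMap_coe (box (u k) (v k)) (shf_mono δ hab)
      (matMap (fun j => box (u' j) (v' j)) (fun k => box (u k) (v k)) d a (shf δ a) x k)).symm
  · intro a
    refine LinearMap.ext fun (x : (Π₀ j, intervalSubmodule 𝕜 (box (u j) (v j)) a)) =>
      DFinsupp.ext fun k => Subtype.ext ?_
    refine Eq.trans (matMap_comm δ u v u' v' c d hc hd hdc a x k) ?_
    exact (intervalMap_coe (box (u k) (v k))
      ((le_shf hδ a).trans (le_shf hδ (shf δ a))) (x k)).symm
  · intro a
    refine LinearMap.ext fun (x : (Π₀ j, intervalSubmodule 𝕜 (box (u' j) (v' j)) a)) =>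
      DFinsupp.ext fun k => Subtype.ext ?_
    refine Eq.trans (matMap_comm δ u' v' u v d c hd hc hcd a x k) ?_
    exact (intervalMap_coe (box (u' k) (v' k))
      ((le_shf hδ a).trans (le_shf hδ (shf δ a))) (x k)).symm

/-- A nonzero internal map of an interval module factors through the other module. -/
lemma factor_one {P : Type u} [Preorder P] {𝕜 : Type v} [Field 𝕜] {I : Set P}
    (hI : IntervalConvex I) {a b : P} (hab : a ≤ b) (ha : a ∈ I) (hb : b ∈ I)
    (h : ∀ x, (intervalModule 𝕜 I hI).map hab x = 0) : False := by
  have h1 := congrArg Subtype.val (h ⟨1, fun h => absurd ha h⟩)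
  have h2 := intervalMap_coe (𝕜 := 𝕜) I hab ⟨1, fun h => absurd ha h⟩
  rw [if_pos hb] at h2
  exact one_ne_zero (h2.symm.trans h1)

lemma sint_mem₁ {n : ℕ} {𝕜 : Type v} [Field 𝕜] {δ : ℝ} {hδ : 0 ≤ δ} {I I' : Set (Fin n → ℝ)}
    {hI : IntervalConvex I} {hI' : IntervalConvex I'}
    (F : SInt δ hδ (intervalModule 𝕜 I hI) (intervalModule 𝕜 I' hI')) (a : Fin n → ℝ)
    (ha : a ∈ I) (hb : shf δ (shf δ a) ∈ I) : shf δ a ∈ I' := by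
  by_contra hn
  refine factor_one (𝕜 := 𝕜) hI ((le_shf hδ a).trans (le_shf hδ _)) ha hb fun x => ?_
  refine (LinearMap.congr_fun (F.comm₁ a) x).symm.trans ?_
  rw [LinearMap.comp_apply]
  have : F.φ a x = 0 := Subtype.ext ((F.φ a x).2 hn)
  rw [this, map_zero]

lemma sint_mem₂ {n : ℕ} {𝕜 : Type v} [Field 𝕜] {δ : ℝ} {hδ : 0 ≤ δ} {I I' : Set (Fin n → ℝ)}
    {hI : IntervalConvex I} {hI' : IntervalConvex I'}
    (F : SInt δ hδ (intervalModule 𝕜 I hI) (intervalModule 𝕜 I' hI')) (a : Fin n → ℝ)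
    (ha : a ∈ I') (hb : shf δ (shf δ a) ∈ I') : shf δ a ∈ I := by
  by_contra hn
  refine factor_one (𝕜 := 𝕜) hI' ((le_shf hδ a).trans (le_shf hδ _)) ha hb fun x => ?_
  refine (LinearMap.congr_fun (F.comm₂ a) x).symm.trans ?_
  rw [LinearMap.comp_apply]
  have : F.ψ a x = 0 := Subtype.ext ((F.ψ a x).2 hn)
  rw [this, map_zero]

lemma sint_zero {n : ℕ} {𝕜 : Type v} [Field 𝕜] {δ : ℝ} {hδ : 0 ≤ δ} {I : Set (Fin n → ℝ)}
    {hI : IntervalConvex I}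
    (F : SInt δ hδ (intervalModule 𝕜 I hI) (zeroMod.{0, v, v} (Fin n → ℝ) 𝕜)) (a : Fin n → ℝ)
    (ha : a ∈ I) (hb : shf δ (shf δ a) ∈ I) : False := by
  refine factor_one (𝕜 := 𝕜) hI ((le_shf hδ a).trans (le_shf hδ _)) ha hb fun x => ?_
  refine (LinearMap.congr_fun (F.comm₁ a) x).symm.trans ?_
  rw [LinearMap.comp_apply]
  exact (congrArg _ (Subsingleton.elim (α := PUnit) _ 0)).trans (map_zero _)

/-- Lower-left corners of the first barcode. -/
def exU : Fin 3 → Fin 2 → ℝ := ![![0, 1], ![0, -1], ![2, 1]]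
/-- Upper-right corners of the first barcode. -/
def exV : Fin 3 → Fin 2 → ℝ := ![![10, 11], ![12, 11], ![10, 9]]
/-- Lower-left corners of the second barcode. -/
def exU' : Fin 3 → Fin 2 → ℝ := ![![1, 0], ![1, 0], ![-1, 2]]
/-- Upper-right corners of the second barcode. -/
def exV' : Fin 3 → Fin 2 → ℝ := ![![11, 10], ![9, 12], ![11, 10]]

lemma ex_dist (𝕜 : Type v) [Field 𝕜] :
    interleavingDist
      (dirSum fun j => intervalModule 𝕜 (box (exU j) (exV j)) (box_isInterval (exU j) (exV j)).1)
      (dirSum fun k => intervalModule 𝕜 (box (exU' k) (exV' k))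
        (box_isInterval (exU' k) (exV' k)).1) ≤ 1 := by
  obtain ⟨F⟩ := sint_of_matrices (𝕜 := 𝕜) 1 zero_le_one exU exV exU' exV'
    ![![1, 1, 1], ![1, 1, 0], ![1, 0, 1]] ![![-1, 1, 1], ![1, 0, -1], ![1, -1, 0]]
    (by
      intro k j
      fin_cases k <;> fin_cases j <;>
        simp [exU, exV, exU', exV', Fin.forall_fin_two] <;> norm_num)
    (by
      intro k j
      fin_cases k <;> fin_cases j <;>
        simp [exU, exV, exU', exV', Fin.forall_fin_two] <;> norm_num)
    (by
      intro k j
      fin_cases k <;> fin_cases j <;> simp [Fin.sum_univ_three])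
    (by
      intro k j
      fin_cases k <;> fin_cases j <;> simp [Fin.sum_univ_three])
  have := dist_le_of_sint _ _ _ _ F
  rwa [ENNReal.ofReal_one] at this

lemma ex_not_matching (𝕜 : Type v) [Field 𝕜] (ε : ℝ≥0∞) (hε : ε < 3) :
    ¬ IsEpsMatching 𝕜 (fun j => box (exU j) (exV j)) (fun k => box (exU' k) (exV' k))
      (fun j => (box_isInterval (exU j) (exV j)).1)
      (fun k => (box_isInterval (exU' k) (exV' k)).1) ε := by
  rintro ⟨J', K', e, h1, h2, -⟩
  obtain ⟨c, hc1, hc2⟩ := exists_between hε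
  have hct : c ≠ ⊤ := ne_top_of_lt hc2
  obtain ⟨δ, hδ, rfl⟩ : ∃ δ : ℝ, 0 ≤ δ ∧ c = ENNReal.ofReal δ :=
    ⟨c.toReal, ENNReal.toReal_nonneg, (ENNReal.ofReal_toReal hct).symm⟩
  have hδ3 : δ < 3 := by
    have h3 : (3 : ℝ≥0∞) = ENNReal.ofReal 3 := by norm_num
    rw [h3] at hc2
    exact (ENNReal.ofReal_lt_ofReal_iff (by norm_num)).1 hc2
  have m1 : (1 : Fin 3) ∈ J' := by
    by_contra h
    obtain ⟨F⟩ := sint_of_dist_lt δ hδ _ _ ((h2 1 h).trans_lt hc1)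
    refine sint_zero F ![1, 0] ?_ ?_ <;>
      simp [box, shf, exU, exV, Fin.forall_fin_two] <;> (try constructor) <;>
      (try constructor) <;> linarith
  have m2 : (2 : Fin 3) ∈ J' := by
    by_contra h
    obtain ⟨F⟩ := sint_of_dist_lt δ hδ _ _ ((h2 2 h).trans_lt hc1)
    refine sint_zero F ![3, 2] ?_ ?_ <;>
      simp [box, shf, exU, exV, Fin.forall_fin_two] <;> norm_num <;> (try constructor) <;>
      (try constructor) <;> linarith
  have hF : ∀ j (h : j ∈ J') k, (e ⟨j, h⟩ : Fin 3) = k →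
      Nonempty (SInt δ hδ
        (intervalModule 𝕜 (box (exU j) (exV j)) (box_isInterval (exU j) (exV j)).1)
        (intervalModule 𝕜 (box (exU' k) (exV' k)) (box_isInterval (exU' k) (exV' k)).1)) := by
    rintro j h k rfl
    exact sint_of_dist_lt δ hδ _ _ ((h1 ⟨j, h⟩).trans_lt hc1)
  have hbox : ∀ (x u v : Fin 2 → ℝ), x ∈ box u v ↔
      (u 0 < x 0 ∧ x 0 < v 0) ∧ (u 1 < x 1 ∧ x 1 < v 1) := by
    intro x u v
    simp [box, Fin.forall_fin_two]
  have a1 : (e ⟨1, m1⟩ : Fin 3) = 0 := by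
    have hcases : ∀ k : Fin 3, k = 0 ∨ k = 1 ∨ k = 2 := by decide
    rcases hcases (e ⟨1, m1⟩ : Fin 3) with h | h | h
    · exact h
    · obtain ⟨F⟩ := hF _ _ _ h
      have := sint_mem₁ F ![9 - δ, 0]
      simp [hbox, shf, exU, exV, exU', exV'] at this
      exfalso
      grind
    · obtain ⟨F⟩ := hF _ _ _ h
      have := sint_mem₁ F ![1, 2 - δ]
      simp [hbox, shf, exU, exV, exU', exV'] at this
      exfalso
      grind
  have a2 : (e ⟨2, m2⟩ : Fin 3) = 0 := by
    have hcases : ∀ k : Fin 3, k = 0 ∨ k = 1 ∨ k = 2 := by decide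
    rcases hcases (e ⟨2, m2⟩ : Fin 3) with h | h | h
    · exact h
    · obtain ⟨F⟩ := hF _ _ _ h
      have := sint_mem₂ F ![2, 9 - δ]
      simp [hbox, shf, exU, exV, exU', exV'] at this
      exfalso
      grind
    · obtain ⟨F⟩ := hF _ _ _ h
      have := sint_mem₂ F ![2 - δ, 3]
      simp [hbox, shf, exU, exV, exU', exV'] at this
      exfalso
      grind
  have := e.injective (Subtype.ext (a1.trans a2.symm))
  have := congrArg Subtype.val this
  exact absurd (show (1 : Fin 3) = 2 from this) (by decide)

end Helpers

/-- The bottleneck distance bounds the interleaving distance: for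
interval decomposable `n`-parameter persistence modules `M ≅ ⨁_j 𝟙^{I_j}` and
`N ≅ ⨁_κ 𝟙^{I'_κ}` one has `d^ω(M,N) ≤ d_B(M,N)`; moreover the inequality can be
strict: there exist rectangle decomposable 2-parameter modules that are 1-interleaved
but admit no `ε`-matching for any `ε < 3`. -/
theorem interleaving_le_bottleneck (𝕜 : Type v) [Field 𝕜] :
    (∀ {J K : Type} (I : J → Set (Fin n → ℝ)) (I' : K → Set (Fin n → ℝ))
      (hI : ∀ j, IsInterval (I j)) (hI' : ∀ κ, IsInterval (I' κ))
      (M N : PersistenceModule (Fin n → ℝ) 𝕜)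
      (_ : Nonempty (PersIso M (dirSum fun j => intervalModule 𝕜 (I j) (hI j).1)))
      (_ : Nonempty (PersIso N (dirSum fun κ => intervalModule 𝕜 (I' κ) (hI' κ).1))),
      interleavingDist M N
        ≤ bottleneckDist 𝕜 I I' (fun j => (hI j).1) (fun κ => (hI' κ).1)) ∧
    (∃ (J K : Type) (_ : Fintype J) (_ : Fintype K)
      (I : J → Set (Fin 2 → ℝ)) (I' : K → Set (Fin 2 → ℝ))
      (hI : ∀ j, IsInterval (I j)) (hI' : ∀ κ, IsInterval (I' κ)),
      (∀ j, ∃ u v : Fin 2 → ℝ, I j = {x | ∀ i, x i ∈ Set.Ioo (u i) (v i)}) ∧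
      (∀ κ, ∃ u v : Fin 2 → ℝ, I' κ = {x | ∀ i, x i ∈ Set.Ioo (u i) (v i)}) ∧
      interleavingDist (dirSum fun j => intervalModule 𝕜 (I j) (hI j).1)
          (dirSum fun κ => intervalModule 𝕜 (I' κ) (hI' κ).1) ≤ 1 ∧
      ∀ ε : ℝ≥0∞, ε < 3 →
        ¬ IsEpsMatching 𝕜 I I' (fun j => (hI j).1) (fun κ => (hI' κ).1) ε) := by
  refine ⟨?_, ?_⟩
  · rintro J K I I' hI hI' M N ⟨eM⟩ ⟨eN⟩
    exact part_one 𝕜 I I' _ _ M N eM eN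
  · exact ⟨Fin 3, Fin 3, inferInstance, inferInstance,
      fun j => box (exU j) (exV j), fun k => box (exU' k) (exV' k),
      fun j => box_isInterval _ _, fun k => box_isInterval _ _,
      fun j => ⟨_, _, rfl⟩, fun k => ⟨_, _, rfl⟩, ex_dist 𝕜, ex_not_matching 𝕜⟩

end PersistenceModule
end
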